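/- For each n, let (N_1,…,N_n) ~ Mult(n, 1/n, …, 1/n) and define the random continuous function X_n ∈ C([0,1], ℝ) by X_n(k/n) = n^{−1/2} ∑_{j=1}^k (N_j − 1) for k = 0,…,n, with X_n affine on each interval [(k−1)/n, k/n]. Let B be a standard Brownian motion. Then the laws of X_n converge weakly, in the space C([0,1], ℝ) with the uniform topology, to the law of the Brownian bridge (B_t − t·B_1)_{t∈[0,1]}. -/

import Mathlib

open MeasureTheory ProbabilityTheory Filter Topology
open scoped ENNReal NNReal BoundedContinuousFunction unitInterval

/-- A random vector `X : Ω → Fin n → ℕ` has the multinomial distribution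
`Mult(k, 1/n, …, 1/n)` if `P(X = m) = k! / (∏ i, (m i)!) * n^{-k}` whenever
`∑ i, m i = k`, and `P(X = m) = 0` otherwise. -/
def IsMultinomialUnif {Ω : Type*} [MeasureSpace Ω] {n : ℕ}
    (X : Ω → Fin n → ℕ) (k : ℕ) : Prop :=
  ∀ m : Fin n → ℕ,
    ℙ {ω | X ω = m} =
      if ∑ i, m i = k then
        (k.factorial : ℝ≥0∞) / ((∏ i, ((m i).factorial : ℝ≥0∞)) * (n : ℝ≥0∞) ^ k)
      else 0

/-- `B : Ω → C([0,1], ℝ)` is a standard Brownian motion when it is a centered Gaussian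
process with covariance `min s t`, i.e. every linear combination `∑ i, c i * B (t i)` is a
centered Gaussian variable with variance `∑ i j, c i * c j * min (t i) (t j)`. -/
def IsStandardBM {Ω : Type*} [MeasureSpace Ω] (B : Ω → C(unitInterval, ℝ)) : Prop :=
  ∀ (k : ℕ) (ts : Fin k → unitInterval) (c : Fin k → ℝ),
    Measure.map (fun ω => ∑ i, c i * (B ω) (ts i)) ℙ
      = gaussianReal 0 (∑ i, ∑ j, c i * c j * min ((ts i : ℝ)) ((ts j : ℝ))).toNNReal

/-- The Brownian bridge associated with a path `g`: `t ↦ g t − t * g 1`. -/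
noncomputable def brBridge (g : C(unitInterval, ℝ)) : C(unitInterval, ℝ) :=
  ⟨fun u => g u - (u : ℝ) * g 1,
    (map_continuous g).sub (continuous_subtype_val.mul continuous_const)⟩

/-!
Write `W n t = ∑ j, n ^ (-1 / 2) * ramp (n * t - j) * (N j - 1)` for the polygonal walk. Everything
about the counts is read off the generating function `E ∏ z_j ^ N_j = ((∑ z_j) / n) ^ n`.

At `z_j = exp (i a_j)` with small `a_j` of mean zero it expands to `exp (-(∑ a_j ^ 2) / 2)`. Since
`∑ N_j = n` is deterministic, the coefficients of a linear combination of the centred counts may be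
recentred, and the loss `(∑ b_j) ^ 2 / n` in their sum of squares is what turns the Brownian
covariance `min s t` into that of the bridge. By the Cramér–Wold device this settles the
finite-dimensional distributions.

At real exponentials it gives `E |W n t - W n s| ^ 4 ≤ 144 * |t - s| ^ 2`. Dyadic chaining turns
this into a bound, uniform in `n`, on the expected uniform distance between `W n` and its
interpolation at the points `k / 2 ^ m`, which tends to `0` as `m → ∞`. The interpolation is a
continuous function of finitely many values of `W n`, so it converges in distribution for each `m`.
-/

section ConvergenceInDistribution

lemma edist_integral_integral_le {α G : Type*} [MeasurableSpace α] [NormedAddCommGroup G]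
    [NormedSpace ℝ G] {μ : Measure α} {f g : α → G} (hf : Integrable f μ) (hg : Integrable g μ) :
    edist (∫ x, f x ∂μ) (∫ x, g x ∂μ) ≤ ∫⁻ x, edist (f x) (g x) ∂μ := by
  rw [edist_eq_enorm_sub, ← integral_sub hf hg]
  simpa only [edist_eq_enorm_sub] using enorm_integral_le_lintegral_enorm _

variable {ι κ E Ω' : Type*} {Ω : ι → Type*} [∀ i, MeasurableSpace (Ω i)]
  {μ : ∀ i, Measure (Ω i)} [∀ i, IsProbabilityMeasure (μ i)] [MeasurableSpace Ω']
  {μ' : Measure Ω'} [IsProbabilityMeasure μ'] [MeasurableSpace E]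

lemma tendstoInDistribution_iff_forall_integral_tendsto [TopologicalSpace E]
    [OpensMeasurableSpace E] {l : Filter ι} {X : ∀ i, Ω i → E} {Y : Ω' → E}
    (hX : ∀ i, AEMeasurable (X i) (μ i)) (hY : AEMeasurable Y μ') :
    TendstoInDistribution X l Y μ μ' ↔
      ∀ f : E →ᵇ ℝ, Tendsto (fun i => ∫ ω, f (X i ω) ∂μ i) l (𝓝 (∫ ω, f (Y ω) ∂μ')) := by
  have integral_map_X (f : E →ᵇ ℝ) (i : ι) :
      ∫ x, f x ∂(μ i).map (X i) = ∫ ω, f (X i ω) ∂μ i :=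
    integral_map (hX i) f.continuous.measurable.aestronglyMeasurable
  have integral_map_Y (f : E →ᵇ ℝ) : ∫ x, f x ∂μ'.map Y = ∫ ω, f (Y ω) ∂μ' :=
    integral_map hY f.continuous.measurable.aestronglyMeasurable
  simp_rw [← integral_map_X, ← integral_map_Y]
  refine ⟨fun h => ProbabilityMeasure.tendsto_iff_forall_integral_tendsto.mp h.tendsto, fun h =>
    ⟨hX, hY, ProbabilityMeasure.tendsto_iff_forall_integral_tendsto.mpr h⟩⟩

lemma tendstoInDistribution_of_forall_lipschitz [PseudoEMetricSpace E] [OpensMeasurableSpace E]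
    {l : Filter ι} [l.IsCountablyGenerated] {X : ∀ i, Ω i → E} {Y : Ω' → E}
    (hX : ∀ i, AEMeasurable (X i) (μ i)) (hY : AEMeasurable Y μ')
    (h : ∀ (f : E →ᵇ ℝ) (L : ℝ≥0), LipschitzWith L f →
      Tendsto (fun i => ∫ ω, f (X i ω) ∂μ i) l (𝓝 (∫ ω, f (Y ω) ∂μ'))) :
    TendstoInDistribution X l Y μ μ' := by
  refine ⟨hX, hY, tendsto_iff_forall_lipschitz_integral_tendsto.mpr ?_⟩
  rintro f ⟨C, hC⟩ ⟨L, hL⟩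
  have hf {ν : Measure E} : AEStronglyMeasurable f ν :=
    hL.continuous.measurable.aestronglyMeasurable
  simpa only [ProbabilityMeasure.coe_mk, integral_map (hX _) hf, integral_map hY hf]
    using! h ⟨⟨f, hL.continuous⟩, C, hC⟩ L hL

/-- The `L¹` form of Theorem 3.2 in Billingsley, *Convergence of probability measures*. -/
theorem tendstoInDistribution_of_lintegral_edist_le [PseudoEMetricSpace E] [OpensMeasurableSpace E]
    {l : Filter ι} [l.IsCountablyGenerated] {l' : Filter κ} [l'.NeBot]
    {X : ∀ i, Ω i → E} {Y : Ω' → E} {X' : κ → ∀ i, Ω i → E} {Y' : κ → Ω' → E} {b : κ → ℝ≥0∞}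
    (hX : ∀ i, AEMeasurable (X i) (μ i))
    (hX' : ∀ k, TendstoInDistribution (X' k) l (Y' k) μ μ')
    (hY' : TendstoInDistribution Y' l' Y (fun _ => μ') μ')
    (hdist : ∀ k, ∀ᶠ i in l, ∫⁻ ω, edist (X i ω) (X' k i ω) ∂μ i ≤ b k)
    (hb : Tendsto b l' (𝓝 0)) :
    TendstoInDistribution X l Y μ μ' := by
  refine tendstoInDistribution_of_forall_lipschitz hX hY'.aemeasurable_limit fun f L hL => ?_
  have integrable_comp {α : Type _} [MeasurableSpace α] {ν : Measure α} [IsProbabilityMeasure ν]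
      {Z : α → E} (hZ : AEMeasurable Z ν) : Integrable (fun ω => f (Z ω)) ν :=
    (f.integrable (ν.map Z)).comp_aemeasurable hZ
  have lim_X' k : Tendsto (fun i => ∫ ω, f (X' k i ω) ∂μ i) l (𝓝 (∫ ω, f (Y' k ω) ∂μ')) :=
    (tendstoInDistribution_iff_forall_integral_tendsto (hX' k).forall_aemeasurable
      (hX' k).aemeasurable_limit).mp (hX' k) f
  have lim_Y' : Tendsto (fun k => ∫ ω, f (Y' k ω) ∂μ') l' (𝓝 (∫ ω, f (Y ω) ∂μ')) :=
    (tendstoInDistribution_iff_forall_integral_tendsto hY'.forall_aemeasurable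
      hY'.aemeasurable_limit).mp hY' f
  have lim_Lb : Tendsto (fun k => L * b k) l' (𝓝 0) := by
    simpa using ENNReal.Tendsto.const_mul hb (.inr ENNReal.coe_ne_top)
  rw [EMetric.tendsto_nhds]
  intro ε hε
  have hε3 : 0 < ε / 3 := ENNReal.div_pos hε.ne' (by norm_num)
  obtain ⟨k, hkY, hkb⟩ :=
    ((EMetric.tendsto_nhds.mp lim_Y' _ hε3).and (lim_Lb.eventually_lt_const hε3)).exists
  filter_upwards [EMetric.tendsto_nhds.mp (lim_X' k) _ hε3, hdist k] with i hiX' hib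
  have hXX' : edist (∫ ω, f (X i ω) ∂μ i) (∫ ω, f (X' k i ω) ∂μ i) < ε / 3 := calc
    _ ≤ ∫⁻ ω, edist (f (X i ω)) (f (X' k i ω)) ∂μ i :=
      edist_integral_integral_le (integrable_comp (hX i))
        (integrable_comp ((hX' k).forall_aemeasurable i))
    _ ≤ ∫⁻ ω, L * edist (X i ω) (X' k i ω) ∂μ i := lintegral_mono fun ω => hL _ _
    _ = L * ∫⁻ ω, edist (X i ω) (X' k i ω) ∂μ i := lintegral_const_mul' _ _ ENNReal.coe_ne_top
    _ ≤ L * b k := by gcongr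
    _ < ε / 3 := hkb
  calc
    _ ≤ _ := edist_triangle4 _ (∫ ω, f (X' k i ω) ∂μ i) (∫ ω, f (Y' k ω) ∂μ') _
    _ < ε / 3 + ε / 3 + ε / 3 := by gcongr
    _ = ε := ENNReal.add_thirds ε

end ConvergenceInDistribution

section CramerWold

variable {ι Ω' : Type*} [Fintype ι] {Ω : ℕ → Type*} [∀ n, MeasurableSpace (Ω n)]
  {μ : ∀ n, Measure (Ω n)} [∀ n, IsProbabilityMeasure (μ n)] [MeasurableSpace Ω']
  {μ' : Measure Ω'} [IsProbabilityMeasure μ'] {X : ∀ n, Ω n → ι → ℝ} {Y : Ω' → ι → ℝ}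

lemma charFun_map_toLp {α : Type*} [MeasurableSpace α] {ν : Measure α} {Z : α → ι → ℝ}
    (hZ : AEMeasurable Z ν) (c : EuclideanSpace ℝ ι) :
    charFun (ν.map fun ω => WithLp.toLp 2 (Z ω)) c
      = ∫ ω, Complex.exp ((∑ i, c i * Z ω i : ℝ) * Complex.I) ∂ν := by
  rw [charFun_apply, integral_map (by fun_prop) (by fun_prop)]
  simp [PiLp.inner_apply]

theorem tendstoInDistribution_pi_of_tendsto_integral_exp (hX : ∀ n, AEMeasurable (X n) (μ n))
    (hY : AEMeasurable Y μ')
    (h : ∀ c : ι → ℝ, Tendsto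
      (fun n => ∫ ω, Complex.exp ((∑ i, c i * X n ω i : ℝ) * Complex.I) ∂μ n) atTop
      (𝓝 (∫ ω, Complex.exp ((∑ i, c i * Y ω i : ℝ) * Complex.I) ∂μ'))) :
    TendstoInDistribution X atTop Y μ μ' := by
  have h_toLp : TendstoInDistribution (fun n ω => WithLp.toLp 2 (X n ω)) atTop
      (fun ω => WithLp.toLp 2 (Y ω)) μ μ' := by
    refine ⟨by fun_prop, by fun_prop, ProbabilityMeasure.tendsto_of_tendsto_charFun fun c => ?_⟩
    simpa only [ProbabilityMeasure.coe_mk, charFun_map_toLp (hX _), charFun_map_toLp hY] using h c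
  exact h_toLp.continuous_comp (PiLp.continuous_ofLp 2 _)

end CramerWold

section Ramp

/-- The clamp of a real number to `[0, 1]`: the profile of a unit increment spread linearly over
a unit of time. -/
noncomputable def ramp (x : ℝ) : ℝ := max 0 (min 1 x)

lemma ramp_nonneg (x : ℝ) : 0 ≤ ramp x := le_max_left _ _

lemma ramp_le_one (x : ℝ) : ramp x ≤ 1 := max_le zero_le_one (min_le_left _ _)

lemma ramp_mono : Monotone ramp := fun x y h => by unfold ramp; gcongr

lemma continuous_ramp : Continuous ramp := by unfold ramp; fun_prop

lemma ramp_of_nonpos {x : ℝ} (hx : x ≤ 0) : ramp x = 0 :=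
  max_eq_left ((min_le_right _ _).trans hx)

lemma ramp_of_one_le {x : ℝ} (hx : 1 ≤ x) : ramp x = 1 := by simp [ramp, hx]

lemma ramp_of_mem {x : ℝ} (hx : x ∈ I) : ramp x = x := by simp [ramp, hx.1, hx.2]

lemma sum_ramp_sub (n : ℕ) (x : ℝ) :
    ∑ j ∈ Finset.range n, ramp (x - j) = max 0 (min x n) := by
  induction n with
  | zero => simp
  | succ n ih =>
    rw [Finset.sum_range_succ, ih, ramp]
    have : (0 : ℝ) ≤ n := n.cast_nonneg
    push_cast
    grind

lemma sum_ramp_mul_sub (n : ℕ) (t : I) : ∑ j : Fin n, ramp (n * t - j) = n * t := by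
  have h_le : n * (t : ℝ) ≤ n := mul_le_of_le_one_right n.cast_nonneg t.2.2
  rw [Fin.sum_univ_eq_sum_range fun j => ramp (n * t - j), sum_ramp_sub, min_eq_left h_le,
    max_eq_right (mul_nonneg n.cast_nonneg t.2.1)]

lemma ramp_sub_one_le_mul {x y : ℝ} (h : x ≤ y) : ramp (x - 1) ≤ ramp x * ramp y := by
  rcases le_total x 1 with hx | hx
  · rw [ramp_of_nonpos (sub_nonpos.mpr hx)]
    exact mul_nonneg (ramp_nonneg x) (ramp_nonneg y)
  · rw [ramp_of_one_le hx, ramp_of_one_le (hx.trans h), one_mul]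
    exact ramp_le_one _

lemma abs_sum_ramp_mul_ramp_sub_le_one (n : ℕ) {s t : I} (hst : s ≤ t) :
    |∑ j : Fin n, ramp (n * s - j) * ramp (n * t - j) - n * s| ≤ 1 := by
  have hn : (0 : ℝ) ≤ n := n.cast_nonneg
  have h_le : n * (s : ℝ) ≤ n := mul_le_of_le_one_right hn s.2.2
  have h_upper : ∑ j : Fin n, ramp (n * s - j) * ramp (n * t - j) ≤ n * s := by
    refine (Finset.sum_le_sum fun j _ => ?_).trans_eq (sum_ramp_mul_sub n s)
    exact mul_le_of_le_one_right (ramp_nonneg _) (ramp_le_one _)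
  have h_lower : n * (s : ℝ) - 1 ≤ ∑ j : Fin n, ramp (n * s - j) * ramp (n * t - j) := by
    calc n * (s : ℝ) - 1 ≤ ∑ j ∈ Finset.range n, ramp (n * s - 1 - j) := by
          rw [sum_ramp_sub]
          grind
      _ = ∑ j : Fin n, ramp (n * s - j - 1) := by
          rw [← Fin.sum_univ_eq_sum_range fun j => ramp (n * s - 1 - j)]
          simp_rw [sub_right_comm]
      _ ≤ ∑ j : Fin n, ramp (n * s - j) * ramp (n * t - j) := by
          gcongr with j
          exact ramp_sub_one_le_mul (by gcongr)
  rw [abs_le]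
  constructor <;> linarith

lemma abs_sum_ramp_mul_ramp_sub_min_le_one (n : ℕ) (s t : I) :
    |∑ j : Fin n, ramp (n * s - j) * ramp (n * t - j) - n * min (s : ℝ) t| ≤ 1 := by
  rcases le_total s t with h | h
  · rw [min_eq_left (by exact_mod_cast h)]
    exact abs_sum_ramp_mul_ramp_sub_le_one n h
  · rw [min_eq_right (by exact_mod_cast h)]
    simp_rw [mul_comm (ramp (n * s - _))]
    exact abs_sum_ramp_mul_ramp_sub_le_one n h

lemma tendsto_sum_ramp_mul_ramp_div (s t : I) :
    Tendsto (fun n : ℕ => (∑ j : Fin n, ramp (n * s - j) * ramp (n * t - j)) / n) atTop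
      (𝓝 (min (s : ℝ) t)) := by
  rw [tendsto_iff_norm_sub_tendsto_zero]
  refine squeeze_zero' (.of_forall fun _ => norm_nonneg _) ?_ tendsto_inv_atTop_nhds_zero_nat
  filter_upwards [eventually_ne_atTop 0] with n hn
  have hn' : (0 : ℝ) < n := by positivity
  rw [div_sub' hn'.ne', norm_div, Real.norm_natCast, ← one_div]
  gcongr
  exact abs_sum_ramp_mul_ramp_sub_min_le_one n s t

lemma sum_sq_ramp_sub_ramp_le (n : ℕ) (s t : I) :
    ∑ j : Fin n, (ramp (n * t - j) - ramp (n * s - j)) ^ 2 ≤ n * |(t : ℝ) - s| := by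
  wlog hst : s ≤ t generalizing s t
  · simpa only [abs_sub_comm, sub_sq_comm] using this t s (le_of_not_ge hst)
  have h_nonneg (j : Fin n) : 0 ≤ ramp (n * t - j) - ramp (n * s - j) :=
    sub_nonneg.mpr (ramp_mono (by gcongr))
  have h_le_one (j : Fin n) : ramp (n * t - j) - ramp (n * s - j) ≤ 1 := by
    linarith [ramp_le_one (n * t - j), ramp_nonneg (n * s - j)]
  calc ∑ j : Fin n, (ramp (n * t - j) - ramp (n * s - j)) ^ 2
      ≤ ∑ j : Fin n, (ramp (n * t - j) - ramp (n * s - j)) :=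
        Finset.sum_le_sum fun j _ => pow_le_of_le_one (h_nonneg j) (h_le_one j) two_ne_zero
    _ = n * |(t : ℝ) - s| := by
        rw [Finset.sum_sub_distrib, sum_ramp_mul_sub, sum_ramp_mul_sub, abs_of_nonneg, mul_sub]
        exact sub_nonneg.mpr hst

end Ramp

section Grid

/-- The point `k / n` of the regular grid of mesh `1 / n` on the unit interval, clamped to `1` for
`k > n`. -/
noncomputable def gridPoint (n k : ℕ) : I := Set.projIcc 0 1 zero_le_one ((k : ℝ) / n)

lemma natCast_div_natCast_mem_unitInterval {k n : ℕ} (h : k ≤ n) : (k : ℝ) / n ∈ I :=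
  unitInterval.div_mem k.cast_nonneg n.cast_nonneg (by exact_mod_cast h)

lemma gridPoint_eq_mk {n k : ℕ} (h : (k : ℝ) / n ∈ I) : gridPoint n k = ⟨k / n, h⟩ :=
  Set.projIcc_of_mem _ h

lemma gridPoint_of_le {n k : ℕ} (hn : n ≠ 0) (h : n ≤ k) : gridPoint n k = 1 :=
  Set.projIcc_of_right_le _ ((one_le_div₀ (by positivity)).mpr (by exact_mod_cast h))

lemma gridPoint_mul_mul {a : ℕ} (ha : a ≠ 0) (n k : ℕ) :
    gridPoint (a * n) (a * k) = gridPoint n k := by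
  simp only [gridPoint, Nat.cast_mul, mul_div_mul_left _ _ (Nat.cast_ne_zero.mpr ha : (a : ℝ) ≠ 0)]

lemma edist_gridPoint_succ_le {n : ℕ} (hn : n ≠ 0) (k : ℕ) :
    edist (gridPoint n k) (gridPoint n (k + 1)) ≤ (n : ℝ≥0∞)⁻¹ := by
  have hn' : (0 : ℝ) < n := by positivity
  rw [edist_dist, ← ENNReal.ofReal_natCast, ← ENNReal.ofReal_inv_of_pos hn']
  gcongr
  calc dist (gridPoint n k) (gridPoint n (k + 1))
      ≤ dist ((k : ℝ) / n) (((k + 1 : ℕ) : ℝ) / n) := by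
        simpa [gridPoint] using (LipschitzWith.projIcc zero_le_one).dist_le_mul
          ((k : ℝ) / n) (((k + 1 : ℕ) : ℝ) / n)
    _ = (n : ℝ)⁻¹ := by
        rw [dist_comm, Real.dist_eq, ← sub_div, Nat.cast_succ, add_sub_cancel_left, one_div,
          abs_of_pos (inv_pos.mpr hn')]

lemma edist_gridPoint_floor_le {n : ℕ} (hn : n ≠ 0) (t : I) :
    edist (gridPoint n ⌊n * (t : ℝ)⌋₊) t ≤ (n : ℝ≥0∞)⁻¹ := by
  have hn' : (0 : ℝ) < n := by positivity
  have h_floor := Nat.floor_le (mul_nonneg hn'.le t.2.1)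
  rw [edist_dist, ← ENNReal.ofReal_natCast, ← ENNReal.ofReal_inv_of_pos hn']
  gcongr
  calc dist (gridPoint n ⌊n * (t : ℝ)⌋₊) t
      ≤ dist ((⌊n * (t : ℝ)⌋₊ : ℝ) / n) t := by
        simpa [gridPoint] using
          (LipschitzWith.projIcc zero_le_one).dist_le_mul ((⌊n * (t : ℝ)⌋₊ : ℝ) / n) t
    _ = (n * t - ⌊n * (t : ℝ)⌋₊) / n := by
        rw [dist_comm, Real.dist_eq, sub_div, mul_div_cancel_left₀ _ hn'.ne', abs_of_nonneg]
        rwa [sub_nonneg, div_le_iff₀' hn']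
    _ ≤ (n : ℝ)⁻¹ := by
        rw [← one_div]
        gcongr
        linarith [Nat.lt_floor_add_one (n * (t : ℝ))]

lemma tendsto_gridPoint_floor (t : I) :
    Tendsto (fun n : ℕ => gridPoint n ⌊n * (t : ℝ)⌋₊) atTop (𝓝 t) := by
  refine tendsto_iff_edist_tendsto_0.mpr (tendsto_of_tendsto_of_tendsto_of_le_of_le'
    tendsto_const_nhds ENNReal.tendsto_inv_nat_nhds_zero (.of_forall fun _ => zero_le) ?_)
  filter_upwards [eventually_ne_atTop 0] with n hn using edist_gridPoint_floor_le hn t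

end Grid

section GridOscillation

variable {E : Type*} [PseudoEMetricSpace E]

/-- The largest increment of a path between consecutive points of the regular grid of mesh
`1 / n`. -/
noncomputable def gridOscillation (n : ℕ) (g : C(I, E)) : ℝ≥0∞ :=
  (Finset.range n).sup fun k => edist (g (gridPoint n k)) (g (gridPoint n (k + 1)))

lemma edist_le_gridOscillation {n : ℕ} (hn : n ≠ 0) (g : C(I, E)) (k : ℕ) :
    edist (g (gridPoint n k)) (g (gridPoint n (k + 1))) ≤ gridOscillation n g := by
  rcases lt_or_ge k n with hk | hk
  · exact Finset.le_sup (f := fun k => edist (g (gridPoint n k)) (g (gridPoint n (k + 1))))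
      (Finset.mem_range.mpr hk)
  · simp [gridPoint_of_le hn hk, gridPoint_of_le hn (hk.trans k.le_succ)]

lemma edist_apply_dyadic_floor_succ_le (g : C(I, E)) (k : ℕ) (t : I) :
    edist (g (gridPoint (2 ^ k) ⌊(2 ^ k : ℕ) * (t : ℝ)⌋₊))
        (g (gridPoint (2 ^ (k + 1)) ⌊(2 ^ (k + 1) : ℕ) * (t : ℝ)⌋₊))
      ≤ gridOscillation (2 ^ (k + 1)) g := by
  set i := ⌊(2 ^ k : ℕ) * (t : ℝ)⌋₊ with hi
  have h_coarse : gridPoint (2 ^ k) i = gridPoint (2 ^ (k + 1)) (2 * i) := by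
    rw [pow_succ', gridPoint_mul_mul two_ne_zero]
  have h_half : ⌊(2 ^ (k + 1) : ℕ) * (t : ℝ)⌋₊ / 2 = i := by
    rw [hi, ← Nat.floor_div_ofNat]
    push_cast
    congr 1
    ring
  rw [h_coarse]
  obtain h | h : ⌊(2 ^ (k + 1) : ℕ) * (t : ℝ)⌋₊ = 2 * i ∨
      ⌊(2 ^ (k + 1) : ℕ) * (t : ℝ)⌋₊ = 2 * i + 1 := by lia
  · rw [h, edist_self]
    exact zero_le
  · rw [h]
    exact edist_le_gridOscillation (by positivity) g _

lemma edist_apply_gridPoint_dyadic_floor_le (g : C(I, E)) (m : ℕ) (t : I) :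
    edist (g (gridPoint (2 ^ m) ⌊(2 ^ m : ℕ) * (t : ℝ)⌋₊)) (g t)
      ≤ ∑' k, gridOscillation (2 ^ (m + k + 1)) g :=
  edist_le_tsum_of_edist_le_of_tendsto (fun k => gridOscillation (2 ^ (k + 1)) g)
    (fun k => edist_apply_dyadic_floor_succ_le g k t)
    (((g.continuous.tendsto t).comp (tendsto_gridPoint_floor t)).comp
      (tendsto_pow_atTop_atTop_of_one_lt one_lt_two)) m

end GridOscillation

section PolygonalPath

variable {E : Type*} [NormedAddCommGroup E] [NormedSpace ℝ E]

/-- The path on the unit interval with value `v k` at `k / n` for `k ≤ n`, affine in between,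
written as the superposition of its increments. -/
noncomputable def polygonalPath (n : ℕ) (v : ℕ → E) : C(I, E) where
  toFun t := v 0 + ∑ j ∈ Finset.range n, ramp (n * t - j) • (v (j + 1) - v j)
  continuous_toFun := by have := continuous_ramp; fun_prop

lemma polygonalPath_apply (n : ℕ) (v : ℕ → E) (t : I) : polygonalPath n v t
    = v 0 + ∑ j ∈ Finset.range n, ramp (n * t - j) • (v (j + 1) - v j) := rfl

lemma continuous_polygonalPath (n : ℕ) : Continuous (polygonalPath n : (ℕ → E) → C(I, E)) := by
  refine ContinuousMap.continuous_of_continuous_uncurry _ ?_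
  have := continuous_ramp
  simp only [Function.uncurry_def, polygonalPath_apply]
  fun_prop

lemma polygonalPath_congr {n : ℕ} {v w : ℕ → E} (h : ∀ k ≤ n, v k = w k) :
    polygonalPath n v = polygonalPath n w := by
  ext t
  rw [polygonalPath_apply, polygonalPath_apply, h 0 n.zero_le]
  congr 1
  refine Finset.sum_congr rfl fun j hj => ?_
  have := Finset.mem_range.mp hj
  rw [h j (by lia), h (j + 1) (by lia)]

lemma polygonalPath_apply_of_mem_Icc {n k : ℕ} (v : ℕ → E) {t : I}
    (h : (n * t : ℝ) ∈ Set.Icc (k : ℝ) (k + 1)) :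
    polygonalPath n v t = v k + (n * t - k : ℝ) • (v (k + 1) - v k) := by
  have hkn : k ≤ n := by exact_mod_cast h.1.trans (mul_le_of_le_one_right n.cast_nonneg t.2.2)
  have tail : ∑ j ∈ Finset.Ico k n, ramp (n * t - j) • (v (j + 1) - v j)
      = (n * t - k : ℝ) • (v (k + 1) - v k) := by
    rcases hkn.eq_or_lt with rfl | hkn
    · have : (k * t - k : ℝ) = 0 := by
        linarith [h.1, mul_le_of_le_one_right k.cast_nonneg t.2.2]
      simp [this]
    · rw [Finset.sum_eq_sum_Ico_succ_bot hkn, ramp_of_mem ⟨by linarith [h.1], by linarith [h.2]⟩,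
        add_eq_left]
      refine Finset.sum_eq_zero fun j hj => ?_
      have : (k + 1 : ℝ) ≤ j := by exact_mod_cast (Finset.mem_Ico.mp hj).1
      rw [ramp_of_nonpos (by linarith [h.2]), zero_smul]
  have head : ∑ j ∈ Finset.range k, ramp (n * t - j) • (v (j + 1) - v j) = v k - v 0 := by
    rw [← Finset.sum_range_sub]
    refine Finset.sum_congr rfl fun j hj => ?_
    have : (j + 1 : ℝ) ≤ k := by exact_mod_cast Finset.mem_range.mp hj
    rw [ramp_of_one_le (by linarith [h.1]), one_smul]
  rw [polygonalPath_apply, ← Finset.sum_range_add_sum_Ico _ hkn, head, tail]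
  abel

lemma polygonalPath_gridPoint {n k : ℕ} (hn : n ≠ 0) (hk : k ≤ n) (v : ℕ → E) :
    polygonalPath n v (gridPoint n k) = v k := by
  have h_mul : n * (gridPoint n k : ℝ) = k := by
    rw [gridPoint_eq_mk (natCast_div_natCast_mem_unitInterval hk),
      mul_div_cancel₀ _ (Nat.cast_ne_zero.mpr hn)]
  rw [polygonalPath_apply_of_mem_Icc v (by simp [h_mul] : _ ∈ Set.Icc (k : ℝ) (k + 1)), h_mul,
    sub_self, zero_smul, add_zero]

lemma eq_polygonalPath_of_affine {n : ℕ} (hn : n ≠ 0) {g : C(I, E)} {v : ℕ → E}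
    (h_grid : ∀ k ≤ n, ∀ hk : (k : ℝ) / n ∈ I, g ⟨k / n, hk⟩ = v k)
    (h_affine : ∀ k < n, ∀ t : I, (k : ℝ) / n ≤ t → (t : ℝ) ≤ (k + 1) / n →
      ∀ (hk : (k : ℝ) / n ∈ I) (hk' : (k + 1 : ℝ) / n ∈ I), g t = g ⟨k / n, hk⟩ +
        ((t - k / n) * n : ℝ) • (g ⟨(k + 1) / n, hk'⟩ - g ⟨k / n, hk⟩)) :
    g = polygonalPath n v := by
  ext t
  have hn' : (0 : ℝ) < n := by positivity
  obtain ⟨k, hkn, hk⟩ : ∃ k < n, (n * t : ℝ) ∈ Set.Icc (k : ℝ) (k + 1) := by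
    rcases t.2.2.eq_or_lt with ht | ht
    · exact ⟨n - 1, by lia, by simp [ht, Nat.one_le_iff_ne_zero.mpr hn]⟩
    · exact ⟨⌊n * (t : ℝ)⌋₊,
        (Nat.floor_lt (mul_nonneg hn'.le t.2.1)).mpr (mul_lt_of_lt_one_right hn' ht),
        Nat.floor_le (mul_nonneg hn'.le t.2.1), (Nat.lt_floor_add_one _).le⟩
  have h_mem := natCast_div_natCast_mem_unitInterval hkn.le
  have h_mem' := natCast_div_natCast_mem_unitInterval (Nat.succ_le_of_lt hkn)
  have h_grid' := h_grid (k + 1) hkn h_mem'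
  push_cast at h_mem' h_grid'
  rw [polygonalPath_apply_of_mem_Icc v hk, h_affine k hkn t ((div_le_iff₀' hn').mpr hk.1)
    ((le_div_iff₀' hn').mpr hk.2) h_mem h_mem', h_grid k hkn.le, h_grid']
  congr 2
  field_simp

/-- The piecewise affine interpolation of a path at the points of the regular grid of mesh
`1 / n`. -/
noncomputable def polygonalInterp (n : ℕ) (g : C(I, E)) : C(I, E) :=
  polygonalPath n fun k => g (gridPoint n k)

lemma edist_polygonalInterp_apply_le {n : ℕ} (hn : n ≠ 0) (g : C(I, E)) (t : I) :
    edist (polygonalInterp n g t) (g (gridPoint n ⌊n * (t : ℝ)⌋₊)) ≤ gridOscillation n g := by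
  set k := ⌊n * (t : ℝ)⌋₊
  have hk : (n * t : ℝ) ∈ Set.Icc (k : ℝ) (k + 1) :=
    ⟨Nat.floor_le (mul_nonneg n.cast_nonneg t.2.1), (Nat.lt_floor_add_one _).le⟩
  refine le_trans ?_ (edist_le_gridOscillation hn g k)
  rw [polygonalInterp, polygonalPath_apply_of_mem_Icc _ hk, edist_comm (g _), edist_eq_enorm_sub,
    edist_eq_enorm_sub, add_sub_cancel_left, enorm_smul]
  refine mul_le_of_le_one_left' ?_
  rw [Real.enorm_eq_ofReal (by linarith [hk.1]), ENNReal.ofReal_le_one]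
  linarith [hk.2]

lemma tendsto_polygonalInterp (g : C(I, E)) :
    Tendsto (fun n => polygonalInterp n g) atTop (𝓝 g) := by
  rw [EMetric.tendsto_nhds]
  intro ε hε
  obtain ⟨η, hη, hηε⟩ := exists_between hε
  have hη2 : 0 < η / 2 := ENNReal.half_pos hη.ne'
  obtain ⟨δ, hδ, hgδ⟩ := EMetric.uniformContinuous_iff.mp
    (CompactSpace.uniformContinuous_of_continuous g.continuous) _ hη2
  filter_upwards [ENNReal.tendsto_inv_nat_nhds_zero.eventually_lt_const hδ,
    eventually_ne_atTop 0] with n hn hn0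
  have h_osc : gridOscillation n g ≤ η / 2 := Finset.sup_le fun k _ =>
    (hgδ ((edist_gridPoint_succ_le hn0 k).trans_lt hn)).le
  refine lt_of_le_of_lt ?_ hηε
  rw [ContinuousMap.edist_eq_iSup]
  refine iSup_le fun t => ?_
  calc edist (polygonalInterp n g t) (g t)
      ≤ edist (polygonalInterp n g t) (g (gridPoint n ⌊n * (t : ℝ)⌋₊))
        + edist (g (gridPoint n ⌊n * (t : ℝ)⌋₊)) (g t) := edist_triangle _ _ _
    _ ≤ η / 2 + η / 2 := add_le_add ((edist_polygonalInterp_apply_le hn0 g t).trans h_osc)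
        (hgδ ((edist_gridPoint_floor_le hn0 t).trans_lt hn)).le
    _ = η := ENNReal.add_halves η

lemma edist_polygonalInterp_dyadic_le (g : C(I, E)) (m : ℕ) :
    edist (polygonalInterp (2 ^ m) g) g ≤ ∑' k, gridOscillation (2 ^ (m + k)) g := by
  rw [ContinuousMap.edist_eq_iSup]
  refine iSup_le fun t => ?_
  rw [tsum_eq_zero_add' ENNReal.summable]
  exact (edist_triangle _ _ _).trans
    (add_le_add (edist_polygonalInterp_apply_le (by positivity) g t)
      (edist_apply_gridPoint_dyadic_floor_le g m t))

end PolygonalPath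

section KolmogorovCriterion

lemma lintegral_le_lintegral_rpow_rpow_inv {α : Type*} [MeasurableSpace α] {μ : Measure α}
    [IsProbabilityMeasure μ] {f : α → ℝ≥0∞} (hf : AEMeasurable f μ) {p : ℝ} (hp : 1 ≤ p) :
    ∫⁻ x, f x ∂μ ≤ (∫⁻ x, f x ^ p ∂μ) ^ p⁻¹ := by
  simpa [eLpNorm'] using
    eLpNorm'_le_eLpNorm'_of_exponent_le one_pos hp (μ := μ) hf.aestronglyMeasurable

section Oscillation

variable {α E : Type*} [MeasurableSpace α] {μ : Measure α} [PseudoEMetricSpace E]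
  {X : α → C(I, E)} {p q : ℝ} {M : ℝ≥0}

lemma measurable_gridOscillation (hX : IsKolmogorovProcess (fun t ω => X ω t) μ p q M) (n : ℕ) :
    Measurable fun ω => gridOscillation n (X ω) := by
  simp only [gridOscillation, Finset.sup_eq_iSup]
  exact .iSup fun k => .iSup fun _ => hX.measurable_edist

lemma lintegral_gridOscillation_rpow_le (hX : IsKolmogorovProcess (fun t ω => X ω t) μ p q M)
    {n : ℕ} (hn : n ≠ 0) :
    ∫⁻ ω, gridOscillation n (X ω) ^ p ∂μ ≤ M * (n : ℝ≥0∞) ^ (1 - q) := by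
  have osc_rpow_le (g : C(I, E)) : gridOscillation n g ^ p
      ≤ ∑ k ∈ Finset.range n, edist (g (gridPoint n k)) (g (gridPoint n (k + 1))) ^ p := by
    obtain ⟨k, hk, hgk⟩ := Finset.exists_mem_eq_sup (Finset.range n)
      (Finset.nonempty_range_iff.mpr hn)
      fun k => edist (g (gridPoint n k)) (g (gridPoint n (k + 1)))
    rw [gridOscillation, hgk]
    exact Finset.single_le_sum
      (f := fun k => edist (g (gridPoint n k)) (g (gridPoint n (k + 1))) ^ p)
      (fun _ _ => zero_le) hk
  calc ∫⁻ ω, gridOscillation n (X ω) ^ p ∂μ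
      ≤ ∫⁻ ω, ∑ k ∈ Finset.range n,
          edist (X ω (gridPoint n k)) (X ω (gridPoint n (k + 1))) ^ p ∂μ :=
        lintegral_mono fun ω => osc_rpow_le (X ω)
    _ = ∑ k ∈ Finset.range n,
          ∫⁻ ω, edist (X ω (gridPoint n k)) (X ω (gridPoint n (k + 1))) ^ p ∂μ :=
        lintegral_finsetSum _ fun k _ => hX.measurable_edist.pow_const p
    _ ≤ ∑ _k ∈ Finset.range n, M * (n : ℝ≥0∞)⁻¹ ^ q := by
        gcongr with k
        refine (hX.kolmogorovCondition _ _).trans ?_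
        have := hX.q_pos
        gcongr
        exact edist_gridPoint_succ_le hn k
    _ = M * (n : ℝ≥0∞) ^ (1 - q) := by
        have hn0 : (n : ℝ≥0∞) ≠ 0 := by exact_mod_cast hn
        rw [Finset.sum_const, Finset.card_range, nsmul_eq_mul, mul_left_comm, ENNReal.inv_rpow,
          ← ENNReal.rpow_neg, sub_eq_add_neg, ENNReal.rpow_add _ _ hn0 (ENNReal.natCast_ne_top n),
          ENNReal.rpow_one]

lemma lintegral_gridOscillation_two_pow_le [IsProbabilityMeasure μ]
    (hX : IsKolmogorovProcess (fun t ω => X ω t) μ p q M) (hp : 1 ≤ p) (k : ℕ) :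
    ∫⁻ ω, gridOscillation (2 ^ k) (X ω) ∂μ
      ≤ (M : ℝ≥0∞) ^ p⁻¹ * ((2 : ℝ≥0∞) ^ ((1 - q) * p⁻¹)) ^ k := by
  have hp' : 0 ≤ p⁻¹ := inv_nonneg.mpr hX.p_pos.le
  calc _ ≤ (∫⁻ ω, gridOscillation (2 ^ k) (X ω) ^ p ∂μ) ^ p⁻¹ :=
        lintegral_le_lintegral_rpow_rpow_inv (measurable_gridOscillation hX _).aemeasurable hp
    _ ≤ (M * ((2 ^ k : ℕ) : ℝ≥0∞) ^ (1 - q)) ^ p⁻¹ := by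
        gcongr
        exact lintegral_gridOscillation_rpow_le hX (by positivity)
    _ = (M : ℝ≥0∞) ^ p⁻¹ * ((2 : ℝ≥0∞) ^ ((1 - q) * p⁻¹)) ^ k := by
        rw [ENNReal.mul_rpow_of_nonneg _ _ hp', ← ENNReal.rpow_mul, Nat.cast_pow, Nat.cast_ofNat,
          ← ENNReal.rpow_natCast, ← ENNReal.rpow_natCast, ← ENNReal.rpow_mul, ← ENNReal.rpow_mul,
          mul_comm (k : ℝ)]

end Oscillation

lemma tsum_mul_geometric_ne_top {C r : ℝ≥0∞} (hC : C ≠ ∞) (hr : r < 1) :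
    ∑' k : ℕ, C * r ^ k ≠ ∞ := by
  rw [ENNReal.tsum_mul_left, ENNReal.tsum_geometric]
  exact ENNReal.mul_ne_top hC (ENNReal.inv_ne_top.mpr (tsub_pos_of_lt hr).ne')

variable {E Ω' : Type*} [NormedAddCommGroup E] [NormedSpace ℝ E] [MeasurableSpace E] [BorelSpace E]
  [SecondCountableTopology E] [MeasurableSpace C(I, E)] [BorelSpace C(I, E)]
  {Ω : ℕ → Type*} [∀ n, MeasurableSpace (Ω n)] {μ : ∀ n, Measure (Ω n)}
  [∀ n, IsProbabilityMeasure (μ n)] [MeasurableSpace Ω'] {μ' : Measure Ω'}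
  [IsProbabilityMeasure μ'] {X : ∀ n, Ω n → C(I, E)} {Y : Ω' → C(I, E)}

lemma tendstoInDistribution_polygonalInterp
    (h : ∀ (k : ℕ) (t : Fin k → I), TendstoInDistribution (fun n ω i => X n ω (t i)) atTop
      (fun ω i => Y ω (t i)) μ μ') (m : ℕ) :
    TendstoInDistribution (fun n ω => polygonalInterp m (X n ω)) atTop
      (fun ω => polygonalInterp m (Y ω)) μ μ' := by
  have interp_eq (g : C(I, E)) : polygonalInterp m g = polygonalPath m
      fun k => (fun i : Fin (m + 1) => g (gridPoint m i)) (Fin.ofNat (m + 1) k) :=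
    polygonalPath_congr fun k hk => by simp [Nat.mod_eq_of_lt (Nat.lt_succ_of_le hk)]
  simp only [interp_eq]
  exact (h (m + 1) fun i => gridPoint m i).continuous_comp
    (g := fun w : Fin (m + 1) → E => polygonalPath m fun k => w (Fin.ofNat (m + 1) k))
    ((continuous_polygonalPath m).comp (by fun_prop))

theorem tendstoInDistribution_of_isKolmogorovProcess {p q : ℝ} {M : ℝ≥0} (hp : 1 ≤ p) (hq : 1 < q)
    (hX : ∀ n, AEMeasurable (X n) (μ n)) (hY : AEMeasurable Y μ')
    (h_fdd : ∀ (k : ℕ) (t : Fin k → I), TendstoInDistribution (fun n ω i => X n ω (t i)) atTop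
      (fun ω i => Y ω (t i)) μ μ')
    (h_kolm : ∀ᶠ n in atTop, IsKolmogorovProcess (fun t ω => X n ω t) (μ n) p q M) :
    TendstoInDistribution X atTop Y μ μ' := by
  set b : ℕ → ℝ≥0∞ := fun k => (M : ℝ≥0∞) ^ p⁻¹ * ((2 : ℝ≥0∞) ^ ((1 - q) * p⁻¹)) ^ k
  have h_ratio : (2 : ℝ≥0∞) ^ ((1 - q) * p⁻¹) < 1 :=
    ENNReal.rpow_lt_one_of_one_lt_of_neg ENNReal.one_lt_two
      (mul_neg_of_neg_of_pos (by linarith) (by positivity))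
  have h_sum : ∑' k, b k ≠ ∞ := tsum_mul_geometric_ne_top (by finiteness) h_ratio
  have h_interp_Y : TendstoInDistribution (fun m ω => polygonalInterp (2 ^ m) (Y ω)) atTop Y
      (fun _ => μ') μ' :=
    tendstoInDistribution_of_ae_tendsto
      (fun m => (tendstoInDistribution_polygonalInterp h_fdd (2 ^ m)).aemeasurable_limit) hY
      (.of_forall fun ω => (tendsto_polygonalInterp (Y ω)).comp
        (tendsto_pow_atTop_atTop_of_one_lt one_lt_two))
  refine tendstoInDistribution_of_lintegral_edist_le hX
    (fun m => tendstoInDistribution_polygonalInterp h_fdd (2 ^ m)) h_interp_Y (fun m => ?_)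
    (ENNReal.tendsto_sum_nat_add b h_sum)
  filter_upwards [h_kolm] with n hn
  calc ∫⁻ ω, edist (X n ω) (polygonalInterp (2 ^ m) (X n ω)) ∂μ n
      ≤ ∫⁻ ω, ∑' k, gridOscillation (2 ^ (k + m)) (X n ω) ∂μ n := lintegral_mono fun ω => by
        simpa only [edist_comm, add_comm] using edist_polygonalInterp_dyadic_le (X n ω) m
    _ = ∑' k, ∫⁻ ω, gridOscillation (2 ^ (k + m)) (X n ω) ∂μ n :=
        lintegral_tsum fun k => (measurable_gridOscillation hn _).aemeasurable
    _ ≤ ∑' k, b (k + m) :=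
        ENNReal.tsum_le_tsum fun k => lintegral_gridOscillation_two_pow_le hn hp _

end KolmogorovCriterion

lemma pow_four_le_exp_add_exp_neg (x : ℝ) : x ^ 4 ≤ 24 * (Real.exp x + Real.exp (-x)) := by
  have h_exp : |x| ^ 4 / 24 ≤ Real.exp |x| := by
    simpa [Nat.factorial] using Real.pow_div_factorial_le_exp |x| (abs_nonneg x) 4
  rw [Even.pow_abs (by decide), div_le_iff₀' (by norm_num)] at h_exp
  refine h_exp.trans ?_
  gcongr
  rcases abs_choice x with h | h <;> rw [h] <;> linarith [Real.exp_pos x, Real.exp_pos (-x)]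

namespace IsMultinomialUnif

section Law

variable {Ω : Type*} [MeasureSpace Ω] {n k : ℕ} {N : Ω → Fin n → ℕ}

lemma ae_mem_piAntidiag (hN : IsMultinomialUnif N k) :
    ∀ᵐ ω, N ω ∈ Finset.piAntidiag Finset.univ k := by
  have ae_ne (m : Fin n → ℕ) (hm : m ∉ Finset.piAntidiag Finset.univ k) : ∀ᵐ ω, N ω ≠ m := by
    simpa [ae_iff, show ∑ i, m i ≠ k by simpa using hm] using hN m
  filter_upwards [ae_all_iff.mpr fun m => eventually_imp_distrib_left.mpr (ae_ne m)] with ω hω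
  by_contra h
  exact hω _ h rfl

lemma measureReal_eq (hN : IsMultinomialUnif N k) {m : Fin n → ℕ}
    (hm : m ∈ Finset.piAntidiag Finset.univ k) :
    volume.real {ω | N ω = m} = Nat.multinomial Finset.univ m / (n : ℝ) ^ k := by
  have hm' : ∑ i, m i = k := by simpa using hm
  rw [Measure.real, hN m, if_pos hm', Nat.multinomial, hm', Nat.cast_div
    (hm' ▸ Nat.prod_factorial_dvd_factorial_sum _ _)
    (by exact_mod_cast Finset.prod_ne_zero_iff.mpr fun i _ => (m i).factorial_ne_zero), div_div]
  simp

variable [IsProbabilityMeasure (ℙ : Measure Ω)] (hN : IsMultinomialUnif N k)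
  (hN_meas : Measurable N)
include hN hN_meas

lemma integrable_comp {G : Type*} [NormedAddCommGroup G] (f : (Fin n → ℕ) → G) :
    Integrable fun ω => f (N ω) := by
  refine .of_bound (C := ∑ m ∈ Finset.piAntidiag Finset.univ k, ‖f m‖)
    (StronglyMeasurable.of_discrete.comp_measurable hN_meas).aestronglyMeasurable ?_
  filter_upwards [hN.ae_mem_piAntidiag] with ω hω
  exact Finset.single_le_sum (f := fun m => ‖f m‖) (fun _ _ => norm_nonneg _) hω

lemma integral_comp {G : Type*} [NormedAddCommGroup G] [NormedSpace ℝ G] [CompleteSpace G]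
    (f : (Fin n → ℕ) → G) :
    ∫ ω, f (N ω) = ∑ m ∈ Finset.piAntidiag Finset.univ k,
      ((Nat.multinomial Finset.univ m : ℝ) / (n : ℝ) ^ k) • f m := by
  have h_meas (m : Fin n → ℕ) : MeasurableSet {ω | N ω = m} := hN_meas (measurableSet_singleton m)
  calc ∫ ω, f (N ω)
      = ∫ ω, ∑ m ∈ Finset.piAntidiag Finset.univ k,
          {ω | N ω = m}.indicator (fun _ => f m) ω := by
        refine integral_congr_ae ?_
        filter_upwards [hN.ae_mem_piAntidiag] with ω hω
        rw [Finset.sum_eq_single_of_mem (N ω) hω fun m _ hm => by simp [hm.symm]]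
        simp
    _ = _ := by
        rw [integral_finsetSum _ fun m _ => (integrable_const _).indicator (h_meas m)]
        refine Finset.sum_congr rfl fun m hm => ?_
        rw [integral_indicator_const _ (h_meas m), hN.measureReal_eq hm]

lemma integral_prod_pow {𝕜 : Type*} [RCLike 𝕜] (z : Fin n → 𝕜) :
    ∫ ω, ∏ j, z j ^ N ω j = ((∑ j, z j) / n) ^ k := by
  rw [hN.integral_comp hN_meas (fun m => ∏ j, z j ^ m j), div_pow,
    Finset.sum_pow_eq_sum_piAntidiag, Finset.sum_div]
  refine Finset.sum_congr rfl fun m _ => ?_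
  rw [RCLike.real_smul_eq_coe_mul]
  push_cast
  ring

lemma integral_exp_sum (a : Fin n → ℝ) :
    ∫ ω, Real.exp (∑ j, a j * N ω j) = ((∑ j, Real.exp (a j)) / n) ^ k := by
  simp_rw [← hN.integral_prod_pow hN_meas, Real.exp_sum, mul_comm (a _), Real.exp_nat_mul]

lemma integral_cexp_sum (a : Fin n → ℝ) :
    ∫ ω, Complex.exp ((∑ j, a j * N ω j : ℝ) * Complex.I)
      = ((∑ j, Complex.exp (a j * Complex.I)) / n) ^ k := by
  rw [← hN.integral_prod_pow hN_meas]
  simp_rw [← Complex.exp_nat_mul, ← Complex.exp_sum]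
  push_cast
  simp_rw [Finset.sum_mul, mul_assoc, mul_left_comm]

end Law

section Moments

variable {Ω : Type*} [MeasureSpace Ω] [IsProbabilityMeasure (ℙ : Measure Ω)] {n : ℕ}
  {N : Ω → Fin n → ℕ}

lemma integral_exp_sum_mul_sub_le {k : ℕ} (hN : IsMultinomialUnif N k) (hN_meas : Measurable N)
    {a : Fin n → ℝ} (ha : ∀ j, |a j| ≤ 1) :
    ∫ ω, Real.exp (∑ j, a j * (N ω j - k / n)) ≤ Real.exp (k / n * ∑ j, a j ^ 2) := by
  rcases eq_or_ne n 0 with rfl | hn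
  · simp
  have h_mean : (∑ j, Real.exp (a j)) / n ≤ Real.exp ((∑ j, (Real.exp (a j) - 1)) / n) := by
    refine le_of_eq_of_le ?_ (Real.add_one_le_exp _)
    simp [sub_div, hn]
  calc ∫ ω, Real.exp (∑ j, a j * (N ω j - k / n))
      = ((∑ j, Real.exp (a j)) / n) ^ k * Real.exp (-(k / n * ∑ j, a j)) := by
        rw [← hN.integral_exp_sum hN_meas, ← integral_mul_const]
        simp_rw [← Real.exp_add, mul_sub, Finset.sum_sub_distrib, ← Finset.sum_mul,
          mul_comm (∑ j, a j), sub_eq_add_neg]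
    _ ≤ Real.exp ((∑ j, (Real.exp (a j) - 1)) / n) ^ k * Real.exp (-(k / n * ∑ j, a j)) := by
        gcongr
    _ = Real.exp (k / n * ∑ j, (Real.exp (a j) - 1 - a j)) := by
        rw [← Real.exp_nat_mul, ← Real.exp_add, Finset.sum_sub_distrib _ a]
        ring_nf
    _ ≤ Real.exp (k / n * ∑ j, a j ^ 2) := by
        gcongr with j
        exact (le_abs_self _).trans (Real.abs_exp_sub_one_sub_id_le (ha j))

variable (hN : IsMultinomialUnif N n) (hN_meas : Measurable N) {a : Fin n → ℝ}
include hN hN_meas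

lemma integral_exp_le_three (ha : ∑ j, a j ^ 2 = 1) :
    ∫ ω, Real.exp (∑ j, a j * (N ω j - 1)) ≤ 3 := by
  have ha' (j) : |a j| ≤ 1 := by
    rw [← sq_le_one_iff_abs_le_one, ← ha]
    exact Finset.single_le_sum (f := fun j => a j ^ 2) (fun j _ => sq_nonneg (a j))
      (Finset.mem_univ j)
  have hn : (n : ℝ) ≠ 0 := by
    rintro h
    obtain rfl : n = 0 := by exact_mod_cast h
    simp at ha
  have h_le := hN.integral_exp_sum_mul_sub_le hN_meas ha'
  rw [div_self hn, ha, one_mul] at h_le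
  linarith [Real.exp_one_lt_d9]

lemma integral_pow_four_le_of_sum_sq_eq_one (ha : ∑ j, a j ^ 2 = 1) :
    ∫ ω, (∑ j, a j * (N ω j - 1)) ^ 4 ≤ 144 := by
  have h_neg : ∫ ω, Real.exp (-∑ j, a j * (N ω j - 1)) ≤ 3 := by
    simpa using hN.integral_exp_le_three hN_meas (a := -a) (by simpa)
  have integrable_exp := hN.integrable_comp hN_meas fun m => Real.exp (∑ j, a j * (m j - 1))
  have integrable_exp_neg := hN.integrable_comp hN_meas fun m => Real.exp (-∑ j, a j * (m j - 1))
  calc ∫ ω, (∑ j, a j * (N ω j - 1)) ^ 4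
      ≤ ∫ ω, 24 * (Real.exp (∑ j, a j * (N ω j - 1)) + Real.exp (-∑ j, a j * (N ω j - 1))) :=
        integral_mono (hN.integrable_comp hN_meas fun m => (∑ j, a j * (m j - 1)) ^ 4)
          ((integrable_exp.add integrable_exp_neg).const_mul _)
          fun ω => pow_four_le_exp_add_exp_neg _
    _ ≤ 144 := by
        rw [integral_const_mul, integral_add integrable_exp integrable_exp_neg]
        linarith [hN.integral_exp_le_three hN_meas ha]

theorem integral_pow_four_le (a : Fin n → ℝ) :
    ∫ ω, (∑ j, a j * (N ω j - 1)) ^ 4 ≤ 144 * (∑ j, a j ^ 2) ^ 2 := by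
  set s := √(∑ j, a j ^ 2)
  have hs_sq : s ^ 2 = ∑ j, a j ^ 2 := Real.sq_sqrt (by positivity)
  rcases eq_or_ne s 0 with hs | hs
  · have ha : ∀ j, a j = 0 := by
      rw [hs, zero_pow two_ne_zero, eq_comm,
        Finset.sum_eq_zero_iff_of_nonneg (by intros; positivity)] at hs_sq
      simpa using hs_sq
    simp [ha]
  · calc ∫ ω, (∑ j, a j * (N ω j - 1)) ^ 4
        = s ^ 4 * ∫ ω, (∑ j, a j / s * (N ω j - 1)) ^ 4 := by
          rw [← integral_const_mul]
          simp_rw [← mul_pow, Finset.mul_sum, ← mul_assoc, mul_div_cancel₀ _ hs]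
      _ ≤ s ^ 4 * 144 := by
          gcongr
          refine hN.integral_pow_four_le_of_sum_sq_eq_one hN_meas ?_
          simp_rw [div_pow, ← Finset.sum_div, ← hs_sq]
          field_simp
      _ = 144 * (∑ j, a j ^ 2) ^ 2 := by rw [← hs_sq]; ring

end Moments

end IsMultinomialUnif

section CentralLimit

lemma norm_cexp_mul_I_sub_taylor_le {x : ℝ} (hx : |x| ≤ 1) :
    ‖Complex.exp (x * Complex.I) - 1 - x * Complex.I + (x : ℂ) ^ 2 / 2‖ ≤ |x| ^ 3 := by
  have hx_norm : ‖(x : ℂ) * Complex.I‖ = |x| := by simp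
  have h_bound := Complex.exp_bound (x := x * Complex.I) (n := 3) (hx_norm ▸ hx) (by norm_num)
  calc ‖Complex.exp (x * Complex.I) - 1 - x * Complex.I + (x : ℂ) ^ 2 / 2‖
      = ‖Complex.exp (x * Complex.I)
          - ∑ m ∈ Finset.range 3, (x * Complex.I) ^ m / (m.factorial : ℂ)‖ := by
        congr 1
        simp only [Finset.sum_range_succ, Finset.sum_range_zero, Nat.factorial, mul_pow,
          Complex.I_sq]
        push_cast
        ring
    _ ≤ |x| ^ 3 * (2 / 9) := by
        rw [hx_norm] at h_bound
        exact h_bound.trans_eq (by norm_num [Nat.factorial])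
    _ ≤ |x| ^ 3 := mul_le_of_le_one_right (by positivity) (by norm_num)

variable {a : ∀ n : ℕ, Fin n → ℝ} {δ : ℕ → ℝ} {v : ℝ}

lemma tendsto_sum_cexp_mul_I_sub_one (ha : ∀ n j, |a n j| ≤ δ n) (hδ : Tendsto δ atTop (𝓝 0))
    (ha_sum : ∀ n, ∑ j, a n j = 0) (ha_sq : Tendsto (fun n => ∑ j, a n j ^ 2) atTop (𝓝 v)) :
    Tendsto (fun n => ∑ j, (Complex.exp (a n j * Complex.I) - 1)) atTop (𝓝 (-v / 2)) := by
  have h_remainder : Tendsto (fun n => ∑ j, (Complex.exp (a n j * Complex.I) - 1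
      - a n j * Complex.I + (a n j : ℂ) ^ 2 / 2)) atTop (𝓝 0) := by
    have h_bound : Tendsto (fun n => δ n * ∑ j, a n j ^ 2) atTop (𝓝 0) := by
      simpa using hδ.mul ha_sq
    refine squeeze_zero_norm' ?_ h_bound
    filter_upwards [hδ.eventually_le_const zero_lt_one] with n hn
    rw [Finset.mul_sum]
    refine norm_sum_le_of_le _ fun j _ => ?_
    calc _ ≤ |a n j| ^ 3 := norm_cexp_mul_I_sub_taylor_le ((ha n j).trans hn)
      _ = |a n j| * a n j ^ 2 := by rw [← sq_abs (a n j)]; ring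
      _ ≤ δ n * a n j ^ 2 := by gcongr; exact ha n j
  have h_quadratic : Tendsto (fun n => ((-(∑ j, a n j ^ 2) / 2 : ℝ) : ℂ)) atTop (𝓝 (-v / 2)) := by
    exact_mod_cast (Complex.continuous_ofReal.tendsto _).comp (ha_sq.neg.div_const 2)
  have h_linear n : ∑ j, (a n j : ℂ) * Complex.I = 0 := by
    rw [← Finset.sum_mul, ← Complex.ofReal_sum, ha_sum, Complex.ofReal_zero, zero_mul]
  refine (zero_add (-(v : ℂ) / 2) ▸ h_remainder.add h_quadratic).congr fun n => ?_
  simp only [Finset.sum_add_distrib, Finset.sum_sub_distrib, h_linear, ← Finset.sum_div]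
  push_cast
  ring

lemma tendsto_average_cexp_mul_I_pow (ha : ∀ n j, |a n j| ≤ δ n) (hδ : Tendsto δ atTop (𝓝 0))
    (ha_sum : ∀ n, ∑ j, a n j = 0) (ha_sq : Tendsto (fun n => ∑ j, a n j ^ 2) atTop (𝓝 v)) :
    Tendsto (fun n : ℕ => ((∑ j, Complex.exp (a n j * Complex.I)) / n) ^ n) atTop
      (𝓝 (Complex.exp (-v / 2))) := by
  have h_log : Tendsto (fun n : ℕ =>
      n * ((∑ j, (Complex.exp (a n j * Complex.I) - 1)) / n)) atTop (𝓝 (-(v : ℂ) / 2)) := by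
    refine (tendsto_sum_cexp_mul_I_sub_one ha hδ ha_sum ha_sq).congr' ?_
    filter_upwards [eventually_ne_atTop 0] with n hn
    rw [mul_div_cancel₀ _ (Nat.cast_ne_zero.mpr hn)]
  refine (Complex.tendsto_one_add_pow_exp_of_tendsto h_log).congr' ?_
  filter_upwards [eventually_ne_atTop 0] with n hn
  simp [sub_div, hn]

end CentralLimit

namespace IsMultinomialUnif

lemma ae_sum_mul_sub_one_eq {Ω : Type*} [MeasureSpace Ω] {n : ℕ} {N : Ω → Fin n → ℕ}
    (hN : IsMultinomialUnif N n) (b : Fin n → ℝ) :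
    ∀ᵐ ω, ∑ j, b j * (N ω j - 1 : ℝ) = ∑ j, (b j - (∑ i, b i) / n) * N ω j := by
  filter_upwards [hN.ae_mem_piAntidiag] with ω hω
  have h_total : ∑ j, (N ω j : ℝ) = n := by
    exact_mod_cast (Finset.mem_piAntidiag.mp hω).1
  rcases eq_or_ne n 0 with rfl | hn
  · simp
  simp_rw [mul_sub, sub_mul, Finset.sum_sub_distrib, ← Finset.mul_sum, h_total]
  field_simp

theorem tendsto_integral_cexp_sum_mul_sub_one {Ω : ℕ → Type*} [∀ n, MeasureSpace (Ω n)]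
    [∀ n, IsProbabilityMeasure (ℙ : Measure (Ω n))] {N : ∀ n, Ω n → Fin n → ℕ}
    (hN : ∀ n, IsMultinomialUnif (N n) n) (hN_meas : ∀ n, Measurable (N n))
    {b : ∀ n, Fin n → ℝ} {δ : ℕ → ℝ} {v : ℝ} (hb : ∀ n j, |b n j| ≤ δ n)
    (hδ : Tendsto δ atTop (𝓝 0))
    (hb_sq : Tendsto (fun n => ∑ j, b n j ^ 2 - (∑ j, b n j) ^ 2 / n) atTop (𝓝 v)) :
    Tendsto (fun n => ∫ ω, Complex.exp ((∑ j, b n j * (N n ω j - 1) : ℝ) * Complex.I)) atTop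
      (𝓝 (Complex.exp (-v / 2))) := by
  set a : ∀ n, Fin n → ℝ := fun n j => b n j - (∑ i, b n i) / n
  have h_int n : ∫ ω, Complex.exp ((∑ j, b n j * (N n ω j - 1) : ℝ) * Complex.I)
      = ((∑ j, Complex.exp (a n j * Complex.I)) / n) ^ n := by
    rw [← (hN n).integral_cexp_sum (hN_meas n)]
    refine integral_congr_ae ?_
    filter_upwards [(hN n).ae_sum_mul_sub_one_eq (b n)] with ω hω
    rw [hω]
  have h_mean n (j : Fin n) : |(∑ i, b n i) / n| ≤ δ n := by
    have hn : (0 : ℝ) < n := by exact_mod_cast j.pos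
    rw [abs_div, Nat.abs_cast, div_le_iff₀' hn]
    exact (Finset.abs_sum_le_sum_abs _ _).trans
      ((Finset.sum_le_sum fun i _ => hb n i).trans_eq (by simp))
  simp_rw [h_int]
  refine tendsto_average_cexp_mul_I_pow (δ := fun n => δ n + δ n)
    (fun n j => (abs_sub _ _).trans (add_le_add (hb n j) (h_mean n j)))
    (by simpa using hδ.add hδ) (fun n => ?_) (hb_sq.congr fun n => ?_)
  · rcases eq_or_ne n 0 with rfl | hn
    · simp
    simp only [a, Finset.sum_sub_distrib, Finset.sum_const, Finset.card_univ, Fintype.card_fin,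
      nsmul_eq_mul]
    field_simp
    simp
  · rcases eq_or_ne n 0 with rfl | hn
    · simp
    simp only [a, sub_sq, Finset.sum_sub_distrib, Finset.sum_add_distrib, ← Finset.mul_sum,
      ← Finset.sum_mul, Finset.sum_const, Finset.card_univ, Fintype.card_fin, nsmul_eq_mul]
    field_simp
    ring

end IsMultinomialUnif

section CountWalk

variable {n : ℕ}

/-- The partial sum `∑_{j < k} (y_j - 1)`: the excess over `k` of the number of points falling in
the first `k` cells, when `y` is the vector of occupation counts. -/
def excess (y : Fin n → ℕ) (k : ℕ) : ℝ := ∑ j with j.val < k, ((y j : ℝ) - 1)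

lemma excess_zero (y : Fin n → ℕ) : excess y 0 = 0 := by simp [excess]

lemma excess_succ_sub (y : Fin n → ℕ) (j : Fin n) : excess y (j + 1) - excess y j = y j - 1 := by
  have h_insert : Finset.univ.filter (fun i : Fin n => i.val < j + 1)
      = insert j (Finset.univ.filter fun i : Fin n => i.val < j) := by
    ext i
    simp [le_iff_eq_or_lt, Fin.ext_iff]
  rw [excess, h_insert, Finset.sum_insert (by simp), excess, add_sub_cancel_right]

/-- The rescaled walk of a vector `y` of occupation counts: the polygonal path with value
`n ^ (-1 / 2) * ∑_{j < k} (y_j - 1)` at `k / n`. -/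
noncomputable def countWalk (y : Fin n → ℕ) : C(I, ℝ) :=
  polygonalPath n fun k => (√n)⁻¹ * excess y k

lemma countWalk_apply (y : Fin n → ℕ) (t : I) :
    countWalk y t = ∑ j : Fin n, (√n)⁻¹ * ramp (n * t - j) * (y j - 1) := by
  rw [countWalk, polygonalPath_apply, excess_zero, mul_zero, zero_add, ← Fin.sum_univ_eq_sum_range
    fun j => ramp (n * t - j) • ((√n)⁻¹ * excess y (j + 1) - (√n)⁻¹ * excess y j)]
  refine Finset.sum_congr rfl fun j _ => ?_
  rw [← mul_sub, excess_succ_sub, smul_eq_mul]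
  ring

lemma countWalk_injective : Function.Injective (countWalk : (Fin n → ℕ) → C(I, ℝ)) := by
  intro y z h
  have h_excess k (hk : k ≤ n) : excess y k = excess z k := by
    rcases eq_or_ne n 0 with rfl | hn
    · simp [excess]
    have h_grid := DFunLike.congr_fun h (gridPoint n k)
    rw [countWalk, countWalk, polygonalPath_gridPoint hn hk,
      polygonalPath_gridPoint hn hk] at h_grid
    exact mul_left_cancel₀ (by positivity) h_grid
  ext j
  have h_diff := excess_succ_sub y j
  rw [h_excess _ j.2, h_excess _ j.2.le, excess_succ_sub z j] at h_diff
  exact_mod_cast sub_left_injective h_diff.symm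

variable [MeasurableSpace C(I, ℝ)] [BorelSpace C(I, ℝ)] {Ω : Type*} [MeasurableSpace Ω]
  {N : Ω → Fin n → ℕ}

lemma measurable_of_measurable_countWalk (h : Measurable fun ω => countWalk (N ω)) :
    Measurable N :=
  measurable_to_countable' fun y => by
    convert h (measurableSet_singleton (countWalk y)) using 1
    ext ω
    simp [countWalk_injective.eq_iff]

end CountWalk

section Tightness

namespace IsMultinomialUnif

variable {Ω : Type*} [MeasureSpace Ω] [IsProbabilityMeasure (ℙ : Measure Ω)] {n : ℕ}
  {N : Ω → Fin n → ℕ} (hN : IsMultinomialUnif N n) (hN_meas : Measurable N)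
include hN hN_meas

lemma integral_pow_four_countWalk_sub_le (s t : I) :
    ∫ ω, (countWalk (N ω) t - countWalk (N ω) s) ^ 4 ≤ 144 * |(t : ℝ) - s| ^ 2 := by
  simp_rw [countWalk_apply, ← Finset.sum_sub_distrib, ← sub_mul, ← mul_sub]
  refine (hN.integral_pow_four_le hN_meas _).trans ?_
  gcongr
  rcases eq_or_ne n 0 with rfl | hn
  · simp
  have hn' : (0 : ℝ) < n := by positivity
  simp_rw [mul_pow, ← Finset.mul_sum, inv_pow, Real.sq_sqrt hn'.le]
  rw [inv_mul_le_iff₀ hn']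
  exact sum_sq_ramp_sub_ramp_le n s t

lemma isKolmogorovProcess_countWalk :
    IsKolmogorovProcess (fun t ω => countWalk (N ω) t) ℙ 4 2 144 := by
  refine .mk_of_secondCountableTopology
    (fun t => (Measurable.of_discrete (f := fun y => countWalk y t)).comp hN_meas)
    (fun s t => ?_) (by norm_num) (by norm_num)
  calc ∫⁻ ω, edist (countWalk (N ω) s) (countWalk (N ω) t) ^ (4 : ℝ)
      = ∫⁻ ω, ENNReal.ofReal ((countWalk (N ω) t - countWalk (N ω) s) ^ 4) := by
        refine lintegral_congr fun ω => ?_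
        rw [edist_comm, edist_dist, Real.dist_eq, ENNReal.ofReal_rpow_of_nonneg (abs_nonneg _)
          (by norm_num), ← Even.pow_abs (by decide : Even 4)]
        norm_cast
    _ = ENNReal.ofReal (∫ ω, (countWalk (N ω) t - countWalk (N ω) s) ^ 4) :=
        (ofReal_integral_eq_lintegral_ofReal
          (hN.integrable_comp hN_meas fun y => (countWalk y t - countWalk y s) ^ 4)
          (.of_forall fun ω => Even.pow_nonneg (by decide) _)).symm
    _ ≤ ENNReal.ofReal (144 * |(t : ℝ) - s| ^ 2) := by
        gcongr
        exact hN.integral_pow_four_countWalk_sub_le hN_meas s t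
    _ = (144 : ℝ≥0) * edist s t ^ (2 : ℝ) := by
        rw [ENNReal.ofReal_mul (by norm_num), ENNReal.ofReal_pow (abs_nonneg _), edist_comm,
          Subtype.edist_eq, edist_dist, Real.dist_eq]
        norm_num

end IsMultinomialUnif

end Tightness

section FiniteDimensionalLimits

variable {ι : Type*} [Fintype ι]

/-- The variance of `∑ i, c i * W (t i)` for a Brownian bridge `W`, whose covariance is
`(s, t) ↦ min s t - s * t`. -/
def bridgeVariance (t : ι → I) (c : ι → ℝ) : ℝ :=
  ∑ i, ∑ j, c i * c j * min (t i : ℝ) (t j) - (∑ i, c i * t i) ^ 2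

/-- The coefficient of the `j`-th centred count `N_j - 1` in the linear combination
`∑ i, c i * W (t i)` of values of the walk `W` with `n` steps. -/
noncomputable def walkCoeff (t : ι → I) (c : ι → ℝ) (n : ℕ) (j : Fin n) : ℝ :=
  (√n)⁻¹ * ∑ i, c i * ramp (n * t i - j)

lemma sum_mul_countWalk {n : ℕ} (t : ι → I) (c : ι → ℝ) (y : Fin n → ℕ) :
    ∑ i, c i * countWalk y (t i) = ∑ j, walkCoeff t c n j * (y j - 1) := by
  simp_rw [countWalk_apply, walkCoeff, Finset.mul_sum, Finset.sum_mul]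
  rw [Finset.sum_comm]
  refine Finset.sum_congr rfl fun j _ => Finset.sum_congr rfl fun i _ => ?_
  ring

lemma abs_walkCoeff_le (t : ι → I) (c : ι → ℝ) (n : ℕ) (j : Fin n) :
    |walkCoeff t c n j| ≤ (√n)⁻¹ * ∑ i, |c i| := by
  rw [walkCoeff, abs_mul, abs_of_nonneg (by positivity)]
  gcongr
  refine (Finset.abs_sum_le_sum_abs _ _).trans (Finset.sum_le_sum fun i _ => ?_)
  rw [abs_mul, abs_of_nonneg (ramp_nonneg _)]
  exact mul_le_of_le_one_right (abs_nonneg _) (ramp_le_one _)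

lemma sum_walkCoeff (t : ι → I) (c : ι → ℝ) (n : ℕ) :
    ∑ j, walkCoeff t c n j = √n * ∑ i, c i * t i := by
  simp_rw [walkCoeff, ← Finset.mul_sum]
  rw [Finset.sum_comm]
  simp_rw [← Finset.mul_sum, sum_ramp_mul_sub, mul_left_comm _ (n : ℝ), ← Finset.mul_sum]
  rw [← mul_assoc, inv_mul_eq_div, Real.div_sqrt]

lemma sum_sq_walkCoeff (t : ι → I) (c : ι → ℝ) (n : ℕ) :
    ∑ j, walkCoeff t c n j ^ 2 = ∑ i, ∑ i', c i * c i' *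
      ((∑ j : Fin n, ramp (n * t i - j) * ramp (n * t i' - j)) / n) := by
  simp_rw [walkCoeff, mul_pow, ← Finset.mul_sum, inv_pow, Real.sq_sqrt n.cast_nonneg, sq,
    Finset.sum_mul_sum, inv_mul_eq_div, ← mul_div_assoc, ← Finset.sum_div]
  congr 1
  rw [Finset.sum_comm]
  refine Finset.sum_congr rfl fun i _ => ?_
  rw [Finset.sum_comm]
  refine Finset.sum_congr rfl fun i' _ => ?_
  rw [Finset.mul_sum]
  exact Finset.sum_congr rfl fun j _ => by ring

lemma tendsto_sum_sq_walkCoeff_sub (t : ι → I) (c : ι → ℝ) :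
    Tendsto (fun n => ∑ j, walkCoeff t c n j ^ 2 - (∑ j, walkCoeff t c n j) ^ 2 / n) atTop
      (𝓝 (bridgeVariance t c)) := by
  simp_rw [sum_sq_walkCoeff]
  refine (tendsto_finsetSum _ fun i _ => tendsto_finsetSum _ fun i' _ =>
    (tendsto_sum_ramp_mul_ramp_div _ _).const_mul _).sub (tendsto_const_nhds.congr' ?_)
  filter_upwards [eventually_ne_atTop 0] with n hn
  have hn' : (n : ℝ) ≠ 0 := Nat.cast_ne_zero.mpr hn
  rw [sum_walkCoeff, mul_pow, Real.sq_sqrt n.cast_nonneg, mul_div_cancel_left₀ _ hn']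

lemma bridgeVariance_nonneg (t : ι → I) (c : ι → ℝ) : 0 ≤ bridgeVariance t c := by
  refine ge_of_tendsto (tendsto_sum_sq_walkCoeff_sub t c) ?_
  filter_upwards [eventually_ne_atTop 0] with n hn
  rw [sub_nonneg, div_le_iff₀' (by positivity)]
  simpa using sq_sum_le_card_mul_sum_sq (s := Finset.univ) (f := walkCoeff t c n)

lemma IsMultinomialUnif.tendsto_integral_cexp_countWalk {Ω : ℕ → Type*}
    [∀ n, MeasureSpace (Ω n)] [∀ n, IsProbabilityMeasure (ℙ : Measure (Ω n))]
    {N : ∀ n, Ω n → Fin n → ℕ} (hN : ∀ n, IsMultinomialUnif (N n) n)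
    (hN_meas : ∀ n, Measurable (N n)) (t : ι → I) (c : ι → ℝ) :
    Tendsto (fun n =>
        ∫ ω, Complex.exp ((∑ i, c i * countWalk (N n ω) (t i) : ℝ) * Complex.I)) atTop
      (𝓝 (Complex.exp (-bridgeVariance t c / 2))) := by
  have h_small : Tendsto (fun n : ℕ => (√n)⁻¹ * ∑ i, |c i|) atTop (𝓝 0) := by
    simpa using ((tendsto_inv_atTop_zero.comp
      (Real.tendsto_sqrt_atTop.comp tendsto_natCast_atTop_atTop)).mul_const (∑ i, |c i|))
  simp_rw [sum_mul_countWalk]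
  exact tendsto_integral_cexp_sum_mul_sub_one hN hN_meas (abs_walkCoeff_le t c) h_small
    (tendsto_sum_sq_walkCoeff_sub t c)

end FiniteDimensionalLimits

section BrownianBridge

lemma continuous_brBridge : Continuous brBridge := by
  refine ContinuousMap.continuous_of_continuous_uncurry _ ?_
  simp only [Function.uncurry_def, brBridge, ContinuousMap.coe_mk]
  fun_prop

lemma IsStandardBM.map_sum_mul_brBridge {Ω : Type*} [MeasureSpace Ω] {B : Ω → C(I, ℝ)}
    (hB : IsStandardBM B) {k : ℕ} (t : Fin k → I) (c : Fin k → ℝ) :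
    Measure.map (fun ω => ∑ i, c i * brBridge (B ω) (t i)) ℙ
      = gaussianReal 0 (bridgeVariance t c).toNNReal := by
  set m := ∑ i, c i * (t i : ℝ) with hm
  have h_comb g : ∑ i, c i * brBridge g (t i) =
      ∑ i, (Fin.cons (-m) c : Fin (k + 1) → ℝ) i * g ((Fin.cons 1 t : Fin (k + 1) → I) i) := by
    simp only [Fin.sum_univ_succ, Fin.cons_zero, Fin.cons_succ, brBridge, ContinuousMap.coe_mk,
      mul_sub, Finset.sum_sub_distrib, ← mul_assoc, ← Finset.sum_mul, hm]
    ring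
  have h_min_left i : min (1 : ℝ) (t i) = t i := min_eq_right (t i).2.2
  have h_min_right i : min (t i : ℝ) 1 = t i := min_eq_left (t i).2.2
  simp_rw [h_comb]
  rw [hB, bridgeVariance, ← hm]
  congr 2
  simp only [Fin.sum_univ_succ, Fin.cons_zero, Fin.cons_succ, Set.Icc.coe_one, min_self,
    h_min_left, h_min_right, Finset.sum_add_distrib, mul_right_comm _ (-m), mul_assoc (-m),
    ← Finset.mul_sum, ← Finset.sum_mul, ← hm]
  ring

end BrownianBridge

lemma integral_cexp_mul_I_of_map_eq_gaussianReal {α : Type*} [MeasurableSpace α] {μ : Measure α}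
    {Y : α → ℝ} {v : ℝ≥0} (h : μ.map Y = gaussianReal 0 v) :
    ∫ x, Complex.exp (Y x * Complex.I) ∂μ = Complex.exp (-v / 2) := by
  have : NeZero (μ.map Y) := h ▸ inferInstance
  have h_char := charFun_gaussianReal (μ := 0) (v := v) 1
  rw [← h, charFun_apply_real,
    integral_map (aemeasurable_of_map_neZero this) (by fun_prop)] at h_char
  simpa [neg_div] using h_char

section Convergence

variable [MeasurableSpace C(I, ℝ)] [BorelSpace C(I, ℝ)] {Ω' : Type*} [MeasureSpace Ω']
  [IsProbabilityMeasure (ℙ : Measure Ω')] {B : Ω' → C(I, ℝ)} {Ω : ℕ → Type*}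
  [∀ n, MeasureSpace (Ω n)] [∀ n, IsProbabilityMeasure (ℙ : Measure (Ω n))]
  {N : ∀ n, Ω n → Fin n → ℕ}

lemma tendstoInDistribution_countWalk_fdd (hN : ∀ n, IsMultinomialUnif (N n) n)
    (hN_meas : ∀ n, Measurable (N n)) (hB : IsStandardBM B) (hB_meas : Measurable B) {k : ℕ}
    (t : Fin k → I) :
    TendstoInDistribution (fun n ω i => countWalk (N n ω) (t i)) atTop
      (fun ω i => brBridge (B ω) (t i)) (fun _ => ℙ) ℙ := by
  have h_meas i : Measurable fun ω => brBridge (B ω) (t i) :=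
    ((continuous_eval_const (t i)).comp continuous_brBridge).measurable.comp hB_meas
  refine tendstoInDistribution_pi_of_tendsto_integral_exp
    (fun n => ((Measurable.of_discrete (f := fun y i => countWalk y (t i))).comp
      (hN_meas n)).aemeasurable) (measurable_pi_lambda _ h_meas).aemeasurable fun c => ?_
  rw [integral_cexp_mul_I_of_map_eq_gaussianReal (hB.map_sum_mul_brBridge t c),
    Real.coe_toNNReal _ (bridgeVariance_nonneg t c)]
  exact IsMultinomialUnif.tendsto_integral_cexp_countWalk hN hN_meas t c

theorem tendstoInDistribution_countWalk (hN : ∀ n, IsMultinomialUnif (N n) n)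
    (hN_meas : ∀ n, Measurable (N n)) (hB : IsStandardBM B) (hB_meas : Measurable B) :
    TendstoInDistribution (fun n ω => countWalk (N n ω)) atTop (fun ω => brBridge (B ω))
      (fun _ => ℙ) ℙ :=
  tendstoInDistribution_of_isKolmogorovProcess (by norm_num) one_lt_two
    (fun n => ((Measurable.of_discrete (f := countWalk)).comp (hN_meas n)).aemeasurable)
    (continuous_brBridge.measurable.comp hB_meas).aemeasurable
    (fun _ t => tendstoInDistribution_countWalk_fdd hN hN_meas hB hB_meas t)
    (.of_forall fun n => (hN n).isKolmogorovProcess_countWalk (hN_meas n))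

end Convergence

/-- **Proposition 2 of the paper.**  For each `n`, let `(N n j)_{j < n} ~ Mult(n, 1/n, …, 1/n)`
and let `X n : Ω n → C([0,1], ℝ)` be the random continuous function with
`X n (k/n) = n^{-1/2} ∑_{j < k} (N n j − 1)` for `k = 0, …, n`, interpolated affinely on each
interval `[k/n, (k+1)/n]`.  Then the laws of `X n` converge weakly, in `C([0,1], ℝ)` with the
uniform topology, to the law of the Brownian bridge `(B t − t B 1)_{t ∈ [0,1]}` where `B` is
a standard Brownian motion; weak convergence is expressed by convergence of the integrals of
every bounded continuous function `f : C([0,1], ℝ) →ᵇ ℝ`. -/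
theorem multinomial_walk_tendsto_brownian_bridge
    [MeasurableSpace C(unitInterval, ℝ)] [BorelSpace C(unitInterval, ℝ)]
    {Ω' : Type*} [MeasureSpace Ω'] [IsProbabilityMeasure (ℙ : Measure Ω')]
    (B : Ω' → C(unitInterval, ℝ)) (hBmeas : Measurable B) (hB : IsStandardBM B)
    (Ω : ℕ → Type*) [∀ n, MeasureSpace (Ω n)]
    [∀ n, IsProbabilityMeasure (ℙ : Measure (Ω n))]
    (N : ∀ n, Ω n → Fin n → ℕ) (hN : ∀ n, IsMultinomialUnif (N n) n)
    (X : ∀ n, Ω n → C(unitInterval, ℝ)) (hXmeas : ∀ n, Measurable (X n))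
    (hgrid : ∀ n (ω : Ω n) (k : ℕ), k ≤ n → ∀ (hk : (k : ℝ) / n ∈ unitInterval),
      X n ω ⟨(k : ℝ) / n, hk⟩
        = (Real.sqrt n)⁻¹ *
            ∑ j ∈ Finset.univ.filter (fun j : Fin n => (j : ℕ) < k), ((N n ω j : ℝ) - 1))
    (haffine : ∀ n (ω : Ω n) (k : ℕ), k < n → ∀ u : unitInterval,
      (k : ℝ) / n ≤ (u : ℝ) → (u : ℝ) ≤ ((k : ℝ) + 1) / n →
      ∀ (h1 : (k : ℝ) / n ∈ unitInterval) (h2 : ((k : ℝ) + 1) / n ∈ unitInterval),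
      X n ω u = X n ω ⟨(k : ℝ) / n, h1⟩
        + ((u : ℝ) - (k : ℝ) / n) * n *
            (X n ω ⟨((k : ℝ) + 1) / n, h2⟩ - X n ω ⟨(k : ℝ) / n, h1⟩)) :
    ∀ f : C(unitInterval, ℝ) →ᵇ ℝ,
      Tendsto (fun n => ∫ ω, f (X n ω) ∂ℙ) atTop (𝓝 (∫ ω, f (brBridge (B ω)) ∂ℙ)) := by
  intro f
  have hX_walk n (hn : n ≠ 0) (ω : Ω n) : X n ω = countWalk (N n ω) :=
    eq_polygonalPath_of_affine hn (hgrid n ω) (haffine n ω)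
  have hN_meas n : Measurable (N n) := by
    rcases eq_or_ne n 0 with rfl | hn
    · exact measurable_of_subsingleton_codomain _
    · exact measurable_of_measurable_countWalk (by simpa only [← hX_walk n hn] using hXmeas n)
  have h_walk := tendstoInDistribution_countWalk hN hN_meas hB hBmeas
  refine ((tendstoInDistribution_iff_forall_integral_tendsto h_walk.forall_aemeasurable
    h_walk.aemeasurable_limit).mp h_walk f).congr' ?_
  filter_upwards [eventually_ne_atTop 0] with n hn
  simp_rw [hX_walk n hn]
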